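/- Let 𝕜 be a field, V, V', W, W' vector spaces over 𝕜, and d : V → V', δ : W → W' linear maps. Then the space of degenerate cocycles equals the tensor product of the two kernels: ker(d ⊗ 1_W) ⊓ ker(1_V ⊗ δ) = range(TensorProduct.map ι_d ι_δ), where ι_d : ker(d) ↪ V and ι_δ : ker(δ) ↪ W are the subspace inclusions and TensorProduct.map ι_d ι_δ : ker(d) ⊗ ker(δ) → V ⊗ W. -/

import Mathlib

open TensorProduct

/-- Degenerate cocycles: `ker(d ⊗ 1_W) ⊓ ker(1_V ⊗ δ) = im(ker d ⊗ ker δ → V ⊗ W)`. -/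
theorem ker_inf_ker_eq_range_map_ker
    {𝕜 : Type} [Field 𝕜]
    {V V' W W' : Type} [AddCommGroup V] [Module 𝕜 V]
    [AddCommGroup V'] [Module 𝕜 V'] [AddCommGroup W] [Module 𝕜 W]
    [AddCommGroup W'] [Module 𝕜 W']
    (d : V →ₗ[𝕜] V') (δ : W →ₗ[𝕜] W') :
    LinearMap.ker (LinearMap.rTensor W d) ⊓ LinearMap.ker (LinearMap.lTensor V δ)
      = LinearMap.range
          (TensorProduct.map (LinearMap.ker d).subtype (LinearMap.ker δ).subtype) := by
  apply le_antisymm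
  · rintro x ⟨hx1, hx2⟩
    obtain ⟨y, rfl⟩ := (Module.Flat.rTensor_exact W d.exact_subtype_ker_map x).1 hx1
    have hx3 : LinearMap.lTensor V δ (LinearMap.rTensor W (LinearMap.ker d).subtype y) = 0 := hx2
    rw [← LinearMap.comp_apply, LinearMap.lTensor_comp_rTensor,
      ← LinearMap.rTensor_comp_lTensor, LinearMap.comp_apply] at hx3
    have hy : LinearMap.lTensor (LinearMap.ker d) δ y = 0 :=
      Module.Flat.rTensor_preserves_injective_linearMap (M := W') (LinearMap.ker d).subtype
        (LinearMap.ker d).injective_subtype (by rw [hx3, map_zero])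
    obtain ⟨z, rfl⟩ :=
      (Module.Flat.lTensor_exact (LinearMap.ker d) δ.exact_subtype_ker_map y).1 hy
    exact ⟨z, by rw [← LinearMap.comp_apply, LinearMap.rTensor_comp_lTensor]⟩
  · rintro _ ⟨z, rfl⟩
    induction z with
    | zero => simp
    | add a b ha hb => rw [map_add]; exact add_mem ha hb
    | tmul a b => simp
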